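/- Let Θ ⊆ ℝ^n be a nonempty closed convex set, and let g : ℝ^n → ℝ be differentiable with L-Lipschitz gradient, where L > 0. Let θ ∈ Θ, d ∈ ℝ^n, and let θ⁺ ∈ Θ be the metric projection of θ − (1/L)d onto Θ. Then ‖θ⁺ − θ‖² ≤ (4/L)·(g(θ) − g(θ⁺)) + (4/L²)·‖d − ∇g(θ)‖². -/

import Mathlib

open RealInnerProductSpace

/-- The descent lemma. -/
theorem descent_aux {n : ℕ} (g : EuclideanSpace ℝ (Fin n) → ℝ)
    (hdiff : Differentiable ℝ g) (L : ℝ)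
    (hlip : ∀ x y, ‖gradient g x - gradient g y‖ ≤ L * ‖x - y‖)
    (θ s : EuclideanSpace ℝ (Fin n)) :
    g (θ + s) ≤ g θ + ⟪gradient g θ, s⟫ + L / 2 * ‖s‖ ^ 2 := by
  have hf : ∀ t : ℝ, HasDerivAt (fun t : ℝ => g (θ + t • s)) ⟪gradient g (θ + t • s), s⟫ t := by
    intro t
    have h1 : HasDerivAt (fun t : ℝ => θ + t • s) s t := by
      simpa using ((hasDerivAt_id t).smul_const s).const_add θ
    have h2 := (hdiff (θ + t • s)).hasGradientAt.hasFDerivAt.comp_hasDerivAt t h1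
    simpa [Function.comp_def] using h2
  have hB : ∀ t : ℝ, HasDerivAt
      (fun t : ℝ => g θ + t * ⟪gradient g θ, s⟫ + L / 2 * ‖s‖ ^ 2 * t ^ 2)
      (⟪gradient g θ, s⟫ + L * ‖s‖ ^ 2 * t) t := by
    intro t
    have h := (((hasDerivAt_id t).mul_const ⟪gradient g θ, s⟫).const_add (g θ)).add
      ((hasDerivAt_pow 2 t).const_mul (L / 2 * ‖s‖ ^ 2))
    refine h.congr_deriv ?_
    push_cast
    ring
  have key := image_le_of_deriv_right_le_deriv_boundary (a := (0 : ℝ)) (b := 1)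
    (fun t _ => (hf t).continuousAt.continuousWithinAt)
    (fun t _ => (hf t).hasDerivWithinAt) (by simp)
    (fun t _ => (hB t).continuousAt.continuousWithinAt)
    (fun t _ => (hB t).hasDerivWithinAt) (by
      intro t ht
      have h1 := hlip (θ + t • s) θ
      have h2 := real_inner_le_norm (gradient g (θ + t • s) - gradient g θ) s
      rw [inner_sub_left] at h2
      rw [add_sub_cancel_left, norm_smul, Real.norm_of_nonneg ht.1] at h1
      have h3 := mul_le_mul_of_nonneg_right h1 (norm_nonneg s)
      nlinarith) (Set.right_mem_Icc.2 zero_le_one)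
  simpa using key

/-- descent-type bound on the displacement of one inexact
projected gradient step with stepsize `1/L` on an `L`-smooth function. -/
theorem stmt10 {n : ℕ} (Θ : Set (EuclideanSpace ℝ (Fin n)))
    (hΘne : Θ.Nonempty) (hΘclosed : IsClosed Θ) (hΘconvex : Convex ℝ Θ)
    (g : EuclideanSpace ℝ (Fin n) → ℝ)
    (hdiff : Differentiable ℝ g)
    (L : ℝ) (hL : 0 < L)
    (hlip : ∀ x y, ‖gradient g x - gradient g y‖ ≤ L * ‖x - y‖)
    (θ : EuclideanSpace ℝ (Fin n)) (hθ : θ ∈ Θ)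
    (d : EuclideanSpace ℝ (Fin n))
    (θplus : EuclideanSpace ℝ (Fin n)) (hθplus : θplus ∈ Θ)
    (hproj : ∀ y ∈ Θ, ⟪(θ - (1 / L) • d) - θplus, y - θplus⟫ ≤ 0) :
    ‖θplus - θ‖ ^ 2 ≤
      (4 / L) * (g θ - g θplus) + (4 / L ^ 2) * ‖d - gradient g θ‖ ^ 2 := by
  have hdesc := descent_aux g hdiff L hlip θ (θplus - θ)
  rw [add_sub_cancel] at hdesc
  have hp := hproj θ hθ
  set s := θplus - θ with hs
  have e1 : θ - (1 / L) • d - θplus = -(s + (1 / L) • d) := by rw [hs]; abel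
  have e2 : θ - θplus = -s := by rw [hs]; abel
  rw [e1, e2, inner_neg_neg, inner_add_left, real_inner_smul_left,
    real_inner_self_eq_norm_sq] at hp
  have hp' : L * ‖s‖ ^ 2 + ⟪d, s⟫ ≤ 0 := by
    have h := mul_le_mul_of_nonneg_left hp hL.le
    have e : L * (‖s‖ ^ 2 + 1 / L * ⟪d, s⟫) = L * ‖s‖ ^ 2 + ⟪d, s⟫ := by field_simp
    linarith
  have hc := neg_le_of_abs_le (abs_real_inner_le_norm (d - gradient g θ) s)
  rw [inner_sub_left] at hc
  set a := ‖d - gradient g θ‖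
  have hsq : 0 ≤ (L * ‖s‖ - 2 * a) ^ 2 := sq_nonneg _
  have e3 : (4 / L) * (g θ - g θplus) + (4 / L ^ 2) * a ^ 2
      = (4 * L * (g θ - g θplus) + 4 * a ^ 2) / L ^ 2 := by field_simp
  rw [e3, le_div_iff₀ (by positivity)]
  have h4 : L / 2 * ‖s‖ ^ 2 - a * ‖s‖ ≤ g θ - g θplus := by linarith
  have h5 := mul_le_mul_of_nonneg_left h4 hL.le
  nlinarith
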